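/- Under the bin construction, let T ∈ {3,…,K} and let ρ_{1,T},…,ρ_{T,T} ∈ ℝ satisfy ∫_X ∑_{t=1}^T ρ_{t,T} ℓ_{t,T}(x) dμ(x) = 0. Then there exist real numbers ρ_{1,T−1},…,ρ_{T−1,T−1}, η, and τ such that: (i) for every x ∈ X, ∑_{t=1}^T ρ_{t,T} ℓ_{t,T}(x) = ∑_{t=1}^{T−1} ρ_{t,T−1} ℓ_{t,T−1}(x) + η·(1 − σ((x−χ_{T−1})/γ)) + τ·σ((x−χ_{T−1})/γ); (ii) ∫_X ∑_{t=1}^{T−1} ρ_{t,T−1} ℓ_{t,T−1}(x) dμ(x) = 0; and (iii) ∫_X [η·(1 − σ((x−χ_{T−1})/γ)) + τ·σ((x−χ_{T−1})/γ)] dμ(x) = 0. -/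

import Mathlib

/-!
Write `s k x = sigmoid ((x - χ k) / γ)`. Passing from `T - 1` to `T` bins replaces the last function
`s (T - 2)` by the two functions `s (T - 2) - s (T - 1)` and `s (T - 1)`, so
`∑ ρ t * ell T t = ∑ ρ t * ell (T - 1) t + (ρ T - ρ (T - 1)) * s (T - 1)` (`sum_ell_succ`).
With `ρ = 1` this shows by induction that the bin functions form a partition of unity
(`sum_ell_eq_one`), so a constant may be moved from the coefficients of the shorter combination
to the remainder. Put `d = ρ T - ρ (T - 1)` and `η = -d * ∫ s (T - 1) dμ`: the remainder
`η + d * s (T - 1)` has mean zero because `μ` is a probability measure, and then the shorter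
combination, being the difference of two mean-zero functions, has mean zero as well.
-/

open MeasureTheory

/-- The sigmoid function σ(t) = 1/(1+exp(−t)). -/
noncomputable def sigmoid (t : ℝ) : ℝ := 1 / (1 + Real.exp (-t))

/-- The bin functions ℓ_{t,T}. -/
noncomputable def ell (χ : ℕ → ℝ) (γ : ℝ) (T t : ℕ) (x : ℝ) : ℝ :=
  if t = 1 then 1 - sigmoid ((x - χ 1) / γ)
  else if t = T then sigmoid ((x - χ (T - 1)) / γ)
  else sigmoid ((x - χ (t - 1)) / γ) - sigmoid ((x - χ t) / γ)

/-- Splitting the last bin adds a single sigmoid, weighted by the difference of the last two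
coefficients. -/
lemma sum_ell_succ (χ : ℕ → ℝ) (γ : ℝ) (ρ : ℕ → ℝ) (n : ℕ) (x : ℝ) :
    ∑ t ∈ Finset.Icc 1 (n + 3), ρ t * ell χ γ (n + 3) t x
      = (∑ t ∈ Finset.Icc 1 (n + 2), ρ t * ell χ γ (n + 2) t x)
        + (ρ (n + 3) - ρ (n + 2)) * sigmoid ((x - χ (n + 2)) / γ) := by
  rw [Finset.sum_Icc_succ_top (by omega : 1 ≤ n + 2 + 1),
    Finset.sum_Icc_succ_top (by omega : 1 ≤ n + 1 + 1),
    Finset.sum_Icc_succ_top (by omega : 1 ≤ n + 1 + 1)]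
  have h : ∑ t ∈ Finset.Icc 1 (n + 1), ρ t * ell χ γ (n + 3) t x
      = ∑ t ∈ Finset.Icc 1 (n + 1), ρ t * ell χ γ (n + 2) t x := by
    refine Finset.sum_congr rfl fun t ht => ?_
    have := (Finset.mem_Icc.mp ht).2
    simp [ell, show t ≠ n + 3 by omega, show t ≠ n + 2 by omega]
  rw [h]
  simp [ell]
  ring

lemma sum_ell_eq_one (χ : ℕ → ℝ) (γ : ℝ) (n : ℕ) (x : ℝ) :
    ∑ t ∈ Finset.Icc 1 (n + 2), ell χ γ (n + 2) t x = 1 := by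
  induction n with
  | zero => simp [Finset.sum_Icc_succ_top, ell]
  | succ n ih => simpa [ih] using sum_ell_succ χ γ (fun _ => 1) n x

lemma integrable_sigmoid (μ : Measure ℝ) [IsFiniteMeasure μ] (c γ : ℝ) :
    Integrable (fun x => sigmoid ((x - c) / γ)) μ := by
  have hm : Measurable fun x : ℝ => sigmoid ((x - c) / γ) := by
    unfold sigmoid
    fun_prop
  refine Integrable.of_bound hm.aestronglyMeasurable 1 (.of_forall fun x => ?_)
  have h := Real.exp_pos (-((x - c) / γ))
  rw [sigmoid, Real.norm_of_nonneg (by positivity), div_le_one (by positivity)]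
  linarith

lemma integrable_ell (μ : Measure ℝ) [IsFiniteMeasure μ] (χ : ℕ → ℝ) (γ : ℝ) (T t : ℕ) :
    Integrable (fun x => ell χ γ T t x) μ := by
  unfold ell
  split_ifs
  · exact (integrable_const 1).sub (integrable_sigmoid μ _ γ)
  · exact integrable_sigmoid μ _ γ
  · exact (integrable_sigmoid μ _ γ).sub (integrable_sigmoid μ _ γ)

/-- **Lemma A.2 (decomposition lemma).** If ∑_{t=1}^T ρ_{t,T} ℓ_{t,T} integrates to zero,
it can be written as a shorter combination plus a mean-zero two-sigmoid term. -/
theorem ell_decomposition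
    (a b : ℝ) (hab : a < b)
    (pL pU : ℝ) (hpL : 0 < pL) (hpLU : pL ≤ pU)
    (dens : ℝ → ℝ) (hdmeas : Measurable dens)
    (hdens : ∀ x ∈ Set.Icc a b, pL ≤ dens x ∧ dens x ≤ pU)
    (μ : Measure ℝ)
    (hμ : μ = (volume.restrict (Set.Icc a b)).withDensity
        (fun x => ENNReal.ofReal (dens x)))
    [hprob : IsProbabilityMeasure μ]
    (K : ℕ) (hK : 2 ≤ K)
    (χ : ℕ → ℝ) (hχ : ∀ k < K, χ k < χ (k + 1))
    (hXsub : Set.Icc a b ⊆ Set.Icc (χ 0) (χ K))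
    (hmass : ∀ k, 1 ≤ k → k ≤ K →
      μ (Set.Ico (χ (k - 1)) (χ k)) = (K : ENNReal)⁻¹)
    (γ : ℝ) (hγ : γ = 1 / (K : ℝ) ^ 3)
    (T : ℕ) (hT3 : 3 ≤ T) (hTK : T ≤ K)
    (ρ : ℕ → ℝ)
    (hzero : ∫ x, (∑ t ∈ Finset.Icc 1 T, ρ t * ell χ γ T t x) ∂μ = 0) :
    ∃ (ρ' : ℕ → ℝ) (η τ : ℝ),
      (∀ x ∈ Set.Icc a b,
        ∑ t ∈ Finset.Icc 1 T, ρ t * ell χ γ T t x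
          = (∑ t ∈ Finset.Icc 1 (T - 1), ρ' t * ell χ γ (T - 1) t x)
            + (η * (1 - sigmoid ((x - χ (T - 1)) / γ))
               + τ * sigmoid ((x - χ (T - 1)) / γ)))
      ∧ (∫ x, (∑ t ∈ Finset.Icc 1 (T - 1), ρ' t * ell χ γ (T - 1) t x) ∂μ = 0)
      ∧ (∫ x, (η * (1 - sigmoid ((x - χ (T - 1)) / γ))
               + τ * sigmoid ((x - χ (T - 1)) / γ)) ∂μ = 0) := by
  obtain ⟨n, rfl⟩ : ∃ n, T = n + 3 := ⟨T - 3, by omega⟩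
  rw [show n + 3 - 1 = n + 2 by omega]
  set d := ρ (n + 3) - ρ (n + 2) with hd
  set c := ∫ x, sigmoid ((x - χ (n + 2)) / γ) ∂μ with hc
  have hs := integrable_sigmoid μ (χ (n + 2)) γ
  have hg (x : ℝ) : -d * c * (1 - sigmoid ((x - χ (n + 2)) / γ))
      + (d - d * c) * sigmoid ((x - χ (n + 2)) / γ)
      = -d * c + d * sigmoid ((x - χ (n + 2)) / γ) := by ring
  have hshort (x : ℝ) : ∑ t ∈ Finset.Icc 1 (n + 2), (ρ t + d * c) * ell χ γ (n + 2) t x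
      = (∑ t ∈ Finset.Icc 1 (n + 3), ρ t * ell χ γ (n + 3) t x)
        - (-d * c + d * sigmoid ((x - χ (n + 2)) / γ)) := by
    simp only [add_mul, Finset.sum_add_distrib]
    rw [← Finset.mul_sum, sum_ell_eq_one, sum_ell_succ]
    ring
  have hg_int : Integrable (fun x => -d * c + d * sigmoid ((x - χ (n + 2)) / γ)) μ :=
    (integrable_const _).add (hs.const_mul d)
  have hg_zero : ∫ x, (-d * c + d * sigmoid ((x - χ (n + 2)) / γ)) ∂μ = 0 := by
    rw [integral_add (integrable_const _) (hs.const_mul d), integral_const, integral_const_mul, ← hc]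
    simp
  refine ⟨fun t => ρ t + d * c, -d * c, d - d * c, fun x _ => ?_, ?_, ?_⟩
  · rw [hg, hshort]
    ring
  · simp only [hshort]
    rw [integral_sub (integrable_finsetSum _ fun t _ => (integrable_ell μ χ γ _ t).const_mul _)
      hg_int, hzero, hg_zero, sub_zero]
  · simpa only [hg] using hg_zero
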